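/- arXiv:2005.07659 — 2 statements merged into one kernel-verified Lean document; each statement's English description precedes it below -/
import Mathlib

section
/- Let X and Y be real Banach spaces such that X is reflexive, and let i : X → Y be an injective continuous linear map with dense range. Let T > 0, let u : [0,T) → X be bounded in norm (there is M ≥ 0 with ‖u(t)‖_X ≤ M for all t ∈ [0,T)), let b ∈ Y, and define v : [0,T] → Y by v(t) = i(u(t)) for t ∈ [0,T) and v(T) = b. If v is weakly continuous on [0,T] (continuous as a map from [0,T] into Y equipped with its weak topology), then there exists x₀ ∈ X with i(x₀) = b, and the map ũ : [0,T] → X defined by ũ(t) = u(t) for t ∈ [0,T) and ũ(T) = x₀ is weakly continuous on [0,T] (continuous as a map into X equipped with its weak topology). -/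
open Set Topology

/-- A map into a compact set is continuous as soon as its composition with a continuous map that
is injective on that compact set, with values in a Hausdorff space, is continuous. -/
theorem IsCompact.continuousOn_of_comp {α β γ : Type*} [TopologicalSpace α] [TopologicalSpace β]
    [TopologicalSpace γ] [T2Space γ] {K : Set β} (hK : IsCompact K) {f : β → γ}
    (hf : ContinuousOn f K) (hinj : InjOn f K) {g : α → β} {s : Set α} (hg : MapsTo g s K)
    (hfg : ContinuousOn (f ∘ g) s) : ContinuousOn g s := by
  have : CompactSpace K := isCompact_iff_compactSpace.mp hK
  have hemb : IsInducing (K.domRestrict f) :=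
    (hf.domRestrict.isClosedEmbedding hinj.injective).isInducing
  have hcont : Continuous (hg.restrict g s K) := hemb.continuous_iff.mpr hfg.domRestrict
  exact continuousOn_iff_continuous_domRestrict.mpr (continuous_subtype_val.comp hcont)

/-- In a reflexive space, norm-bounded sets are relatively compact for the weak topology. -/
theorem isCompact_closure_toWeakSpace_image_of_reflexive {X : Type*} [NormedAddCommGroup X]
    [NormedSpace ℝ X] (hrefl : Function.Surjective (NormedSpace.inclusionInDoubleDual ℝ X))
    {S : Set X} (hS : Bornology.IsBounded S) : IsCompact (closure (toWeakSpace ℝ X '' S)) := by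
  apply NormedSpace.isCompact_closure_of_isBounded
  · rwa [preimage_image_eq _ (toWeakSpace ℝ X).injective]
  · intro φ _
    obtain ⟨x, hx⟩ := hrefl (WeakDual.toStrongDual φ)
    exact ⟨toWeakSpace ℝ X x, hx⟩

/-- **Weak continuity of Banach-space-valued functions (Strauss-type theorem).**
Let `X`, `Y` be real Banach spaces with `X` reflexive, and `i : X → Y` an injective
continuous linear map with dense range.  Let `T > 0`, let `u : [0,T) → X` be norm-bounded,
let `b ∈ Y`, and let `v : [0,T] → Y` equal `i ∘ u` on `[0,T)` and `b` at `T`.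
If `v` is weakly continuous on `[0,T]`, then `b = i x₀` for some `x₀ ∈ X` and the map
equal to `u` on `[0,T)` and to `x₀` at `T` is weakly continuous on `[0,T]`. -/
theorem weak_continuity_extension
    (X Y : Type*) [NormedAddCommGroup X] [NormedSpace ℝ X] [CompleteSpace X]
    [NormedAddCommGroup Y] [NormedSpace ℝ Y] [CompleteSpace Y]
    (hrefl : Function.Surjective (NormedSpace.inclusionInDoubleDual ℝ X))
    (i : X →L[ℝ] Y) (hi_inj : Function.Injective i) (hi_dense : DenseRange i)
    (T : ℝ) (hT : 0 < T)
    (u : ℝ → X) (M : ℝ) (hM : 0 ≤ M) (hu : ∀ t ∈ Set.Ico (0:ℝ) T, ‖u t‖ ≤ M)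
    (b : Y) (v : ℝ → Y)
    (hv₁ : ∀ t ∈ Set.Ico (0:ℝ) T, v t = i (u t)) (hv₂ : v T = b)
    (hv_weak : ContinuousOn (fun t => toWeakSpace ℝ Y (v t)) (Set.Icc (0:ℝ) T)) :
    ∃ x₀ : X, i x₀ = b ∧
      ContinuousOn (fun t => toWeakSpace ℝ X (if t < T then u t else x₀))
        (Set.Icc (0:ℝ) T) := by
  set K := closure (toWeakSpace ℝ X '' Metric.closedBall 0 M)
  have hK : IsCompact K :=
    isCompact_closure_toWeakSpace_image_of_reflexive hrefl Metric.isBounded_closedBall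
  have huK : ∀ t ∈ Ico (0 : ℝ) T, toWeakSpace ℝ X (u t) ∈ K := fun t ht =>
    subset_closure (mem_image_of_mem _ (by simpa using hu t ht))
  have hi : Continuous (WeakSpace.map i) := (WeakSpace.map i).continuous
  have hT_mem : T ∈ closure (Ico (0 : ℝ) T) := by
    rw [closure_Ico hT.ne]
    exact right_mem_Icc.mpr hT.le
  have hb : toWeakSpace ℝ Y b ∈ WeakSpace.map i '' K := by
    rw [← hv₂, ← (hK.image hi).isClosed.closure_eq]
    have hcont : ContinuousWithinAt (fun t => toWeakSpace ℝ Y (v t)) (Ico 0 T) T :=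
      (hv_weak T (right_mem_Icc.mpr hT.le)).mono Ico_subset_Icc_self
    refine hcont.mem_closure hT_mem fun t ht => ⟨_, huK t ht, ?_⟩
    dsimp only
    rw [hv₁ t ht]
    rfl
  obtain ⟨x₀, hx₀K, hx₀⟩ := hb
  refine ⟨(toWeakSpace ℝ X).symm x₀, hx₀, ?_⟩
  refine hK.continuousOn_of_comp hi.continuousOn (Function.Injective.injOn hi_inj) ?_ ?_
  · intro t ht
    dsimp only
    split_ifs with htT
    · exact huK t ⟨ht.1, htT⟩
    · exact hx₀K
  · refine hv_weak.congr fun t ht => ?_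
    dsimp only [Function.comp]
    split_ifs with htT
    · rw [hv₁ t ⟨ht.1, htT⟩]
      rfl
    · rw [le_antisymm ht.2 (not_lt.mp htT), hv₂]
      exact hx₀
end

section
/- Let u : ℝ² → ℝ² be a continuously differentiable, compactly supported vector field which is divergence-free, i.e., ∂₁u₁(x) + ∂₂u₂(x) = 0 for every x; let n : ℝ² → ℝ³ be twice continuously differentiable with ‖n(x)‖ = 1 for all x ∈ ℝ²; and let φ : ℝ³ → ℝ be continuously differentiable with gradient ∇φ. Then ∫_{ℝ²} ⟨ Dn(x)(u(x)), |∇n(x)|² n(x) − ∇φ(n(x)) + ⟨∇φ(n(x)), n(x)⟩ n(x) ⟩ dx = 0, where |∇n(x)|² = Σ_{i=1}^{2} ‖∂ᵢn(x)‖². (This is the orthogonality relation ⟨u·∇n, |∇n|²n − φ′(n) + (φ′(n)·n)n⟩ = 0 for a divergence-free velocity field and a sphere-valued director, stated on the whole plane with compactly supported u.) -/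
open RealInnerProductSpace MeasureTheory

/-- A compactly supported `C¹` divergence-free vector field is `L²`-orthogonal to the gradient of
every `C¹` function. -/
theorem integral_fderiv_apply_eq_zero_of_divergence_free {ι : Type*} [Fintype ι] [DecidableEq ι]
    {u : EuclideanSpace ℝ ι → EuclideanSpace ℝ ι} (hu : ContDiff ℝ 1 u)
    (hu_supp : HasCompactSupport u)
    (hu_div : ∀ x, ∑ i, fderiv ℝ u x (EuclideanSpace.single i 1) i = 0)
    {g : EuclideanSpace ℝ ι → ℝ} (hg : ContDiff ℝ 1 g) :
    ∫ x, fderiv ℝ g x (u x) = 0 := by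
  have hu_diff : Differentiable ℝ u := hu.differentiable one_ne_zero
  have hcoord (i : ι) : ContDiff ℝ 1 (fun x => u x i) := contDiff_euclidean.1 hu i
  have hcoord_supp (i : ι) : HasCompactSupport (fun x => u x i) :=
    hu_supp.comp_left (g := fun v : EuclideanSpace ℝ ι => v i) rfl
  have hcoord_fderiv (i : ι) (x v : EuclideanSpace ℝ ι) :
      fderiv ℝ (fun y => u y i) x v = fderiv ℝ u x v i := by
    have h := ((EuclideanSpace.proj i : EuclideanSpace ℝ ι →L[ℝ] ℝ).hasFDerivAt.comp x
      (hu_diff x).hasFDerivAt).fderiv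
    exact DFunLike.congr_fun h v
  have hg_cont (v : EuclideanSpace ℝ ι) : Continuous fun x => fderiv ℝ g x v :=
    (hg.continuous_fderiv one_ne_zero).clm_apply continuous_const
  have hcoord_cont (i : ι) (v : EuclideanSpace ℝ ι) :
      Continuous fun x => fderiv ℝ (fun y => u y i) x v :=
    ((hcoord i).continuous_fderiv one_ne_zero).clm_apply continuous_const
  have hint_left (i : ι) :
      Integrable fun x => u x i * fderiv ℝ g x (EuclideanSpace.single i 1) :=
    ((hcoord i).continuous.mul (hg_cont _)).integrable_of_hasCompactSupport
      (hcoord_supp i).mul_right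
  have hint_right (i : ι) :
      Integrable fun x => fderiv ℝ (fun y => u y i) x (EuclideanSpace.single i 1) * g x :=
    ((hcoord_cont i _).mul hg.continuous).integrable_of_hasCompactSupport
      ((hcoord_supp i).fderiv_apply ℝ _).mul_right
  have hint (i : ι) : Integrable fun x => u x i * g x :=
    ((hcoord i).continuous.mul hg.continuous).integrable_of_hasCompactSupport
      (hcoord_supp i).mul_right
  have hexpand (x : EuclideanSpace ℝ ι) :
      fderiv ℝ g x (u x) = ∑ i, u x i * fderiv ℝ g x (EuclideanSpace.single i 1) := by
    conv_lhs => rw [← (EuclideanSpace.basisFun ι ℝ).sum_repr (u x)]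
    simp
  calc ∫ x, fderiv ℝ g x (u x)
      = ∑ i, ∫ x, u x i * fderiv ℝ g x (EuclideanSpace.single i 1) := by
        simp_rw [hexpand]
        exact integral_finsetSum _ fun i _ => hint_left i
    _ = ∑ i, -∫ x, fderiv ℝ (fun y => u y i) x (EuclideanSpace.single i 1) * g x :=
        Finset.sum_congr rfl fun i _ => integral_mul_fderiv_eq_neg_fderiv_mul_of_integrable
          (hint_right i) (hint_left i) (hint i)
          (fun x _ => (hcoord i).differentiable one_ne_zero x)
          (fun x _ => hg.differentiable one_ne_zero x)
    _ = -∫ x, ∑ i, fderiv ℝ (fun y => u y i) x (EuclideanSpace.single i 1) * g x := by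
        rw [Finset.sum_neg_distrib, integral_finsetSum _ fun i _ => hint_right i]
    _ = 0 := by
        simp_rw [hcoord_fderiv, ← Finset.sum_mul, hu_div]
        simp

/-- The derivative of a map into the unit sphere is orthogonal to the map. -/
theorem inner_fderiv_apply_self_eq_zero_of_norm_eq_one {E F : Type*} [NormedAddCommGroup E]
    [NormedSpace ℝ E] [NormedAddCommGroup F] [InnerProductSpace ℝ F] {n : E → F} {x : E}
    (hn : DifferentiableAt ℝ n x) (hn_unit : ∀ y, ‖n y‖ = 1) (v : E) :
    ⟪fderiv ℝ n x v, n x⟫ = 0 := by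
  have h := fderiv_inner_apply ℝ hn hn v
  simp only [real_inner_self_eq_norm_sq, hn_unit] at h
  rw [real_inner_comm (fderiv ℝ n x v) (n x)] at h
  simp at h
  linarith

/-- Orthogonality relation `⟨u·∇n, |∇n|² n − φ′(n) + (φ′(n)·n) n⟩ = 0` (integrated over the
plane) for a compactly supported `C¹` divergence-free velocity field `u : ℝ² → ℝ²`, a `C²`
unit-sphere-valued director `n : ℝ² → ℝ³`, and a `C¹` potential `φ : ℝ³ → ℝ`. -/
theorem orthogonality_divergence_free_director
    (u : EuclideanSpace ℝ (Fin 2) → EuclideanSpace ℝ (Fin 2))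
    (hu : ContDiff ℝ 1 u) (hu_supp : HasCompactSupport u)
    (hu_div : ∀ x, ∑ i : Fin 2, fderiv ℝ u x (EuclideanSpace.single i 1) i = 0)
    (n : EuclideanSpace ℝ (Fin 2) → EuclideanSpace ℝ (Fin 3))
    (hn : ContDiff ℝ 2 n) (hn_unit : ∀ x, ‖n x‖ = 1)
    (φ : EuclideanSpace ℝ (Fin 3) → ℝ) (hφ : ContDiff ℝ 1 φ) :
    ∫ x : EuclideanSpace ℝ (Fin 2),
        ⟪fderiv ℝ n x (u x),
          (∑ i : Fin 2, ‖fderiv ℝ n x (EuclideanSpace.single i 1)‖ ^ 2) • n x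
            - gradient φ (n x) + ⟪gradient φ (n x), n x⟫ • n x⟫ = 0 := by
  have hn_diff : Differentiable ℝ n := hn.differentiable two_ne_zero
  have hφ_diff : Differentiable ℝ φ := hφ.differentiable one_ne_zero
  have hpoint (x : EuclideanSpace ℝ (Fin 2)) :
      ⟪fderiv ℝ n x (u x),
          (∑ i : Fin 2, ‖fderiv ℝ n x (EuclideanSpace.single i 1)‖ ^ 2) • n x
            - gradient φ (n x) + ⟪gradient φ (n x), n x⟫ • n x⟫
        = -fderiv ℝ (φ ∘ n) x (u x) := by
    rw [fderiv_comp x (hφ_diff _) (hn_diff x), inner_add_right, inner_sub_right,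
      inner_smul_right, inner_smul_right,
      inner_fderiv_apply_self_eq_zero_of_norm_eq_one (hn_diff x) hn_unit,
      real_inner_comm, gradient, InnerProductSpace.toDual_symm_apply]
    simp
  simp_rw [hpoint]
  rw [integral_neg, integral_fderiv_apply_eq_zero_of_divergence_free hu hu_supp hu_div
    (hφ.comp (hn.of_le one_le_two)), neg_zero]
end
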